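/- For every x ∈ U, the second derivative of the squared mean curvature at t = 0 is ∂²(H(t)²)/∂t² |_{t=0} = 6 (f(x) + φ'(0))² + (12/n)(f(x) + φ'(0)) Δf(x) + (2/n²)(Δf(x))² + ((4 − 2n)/n) |∇f(x)|² − 2 φ''(0). -/

import Mathlib

open MeasureTheory Real Set
open scoped RealInnerProductSpace

noncomputable section

abbrev En (n : ℕ) : Type := EuclideanSpace ℝ (Fin n)

/-- Partial derivative of `F` in the `i`-th coordinate direction. -/
def pd {m : ℕ} {E : Type} [NormedAddCommGroup E] [NormedSpace ℝ E]
    (i : Fin m) (F : En m → E) (x : En m) : E :=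
  fderiv ℝ F x (EuclideanSpace.single i 1)

/-- The induced (first fundamental form) metric of a map `Y : U → ℝ^{n+1}`. -/
def gmet {n : ℕ} (Y : En n → En (n + 1)) (x : En n) : Matrix (Fin n) (Fin n) ℝ :=
  Matrix.of fun i j => ⟪pd i Y x, pd j Y x⟫

/-- The variation `X(t,x) = (1 + t f(x) + φ(t)) Φ(x)`. -/
def Xvar {n : ℕ} (f : En n → ℝ) (φ : ℝ → ℝ) (Φ : En n → En (n + 1)) (t : ℝ) (x : En n) :
    En (n + 1) :=
  (1 + t * f x + φ t) • Φ x

/-- Second fundamental form `h_{ij} = ⟨∂X/∂x_i, ∂N/∂x_j⟩`. -/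
def sff {n : ℕ} (Y Nf : En n → En (n + 1)) (x : En n) : Matrix (Fin n) (Fin n) ℝ :=
  Matrix.of fun i j => ⟪pd i Y x, pd j Nf x⟫

/-- Mean curvature `H = (1/n) Σ g^{ij} h_{ij}`. -/
def Hmean {n : ℕ} (Y Nf : En n → En (n + 1)) (x : En n) : ℝ :=
  (1 / (n : ℝ)) * ∑ i, ∑ j, (gmet Y x)⁻¹ i j * sff Y Nf x i j

/-- The volume element `√(det g)`. -/
def vElem {n : ℕ} (Y : En n → En (n + 1)) (x : En n) : ℝ :=
  Real.sqrt (gmet Y x).det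

/-- `|∇u|² = Σ g^{ij} ∂_i u ∂_j u` with respect to the metric of `Φ`. -/
def gradSq {n : ℕ} (Φ : En n → En (n + 1)) (u : En n → ℝ) (x : En n) : ℝ :=
  ∑ i, ∑ j, (gmet Φ x)⁻¹ i j * pd i u x * pd j u x

/-- Tangential gradient `∇u = Σ g^{ij} ∂_i u ∂_j Φ ∈ ℝ^{n+1}`. -/
def gradV {n : ℕ} (Φ : En n → En (n + 1)) (u : En n → ℝ) (x : En n) : En (n + 1) :=
  ∑ i, ∑ j, ((gmet Φ x)⁻¹ i j * pd i u x) • pd j Φ x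

/-- Laplace–Beltrami operator `Δu = (1/√g) Σ ∂_i (√g g^{ij} ∂_j u)`. -/
def lapl {n : ℕ} (Φ : En n → En (n + 1)) (u : En n → ℝ) (x : En n) : ℝ :=
  (vElem Φ x)⁻¹ * ∑ i, ∑ j, pd i (fun y => vElem Φ y * (gmet Φ y)⁻¹ i j * pd j u y) x

/-- Christoffel symbols of the metric of `Φ`. -/
def christoffel {n : ℕ} (Φ : En n → En (n + 1)) (k i j : Fin n) (x : En n) : ℝ :=
  (1 / 2) * ∑ l, (gmet Φ x)⁻¹ k l *
    (pd i (fun y => gmet Φ y l j) x + pd j (fun y => gmet Φ y l i) x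
      - pd l (fun y => gmet Φ y i j) x)

/-- Hessian `(∇²u)_{ij} = ∂²u/∂x_i∂x_j − Σ_k Γ^k_{ij} ∂_k u`. -/
def hess {n : ℕ} (Φ : En n → En (n + 1)) (u : En n → ℝ) (x : En n) (i j : Fin n) : ℝ :=
  pd i (fun y => pd j u y) x - ∑ k, christoffel Φ k i j x * pd k u x

/-!
Near the unit sphere, `X = ρ Φ` is a radial graph: its metric is the rank-one perturbation
`ρ² g + dρ ⊗ dρ`, and its unit normals are `±(ρ Φ - ∇ρ) / √W` with `W = ρ² + |∇ρ|²`. Since `Φ` is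
spherical, pairing this normal with `∂ᵢ∂ⱼX` only involves the intrinsic Hessian of `ρ` and the two
metrics, and tracing with the Sherman–Morrison inverse of the metric of `X` gives
`H² = ((n + |∇ρ|² / W - (Δρ - ∇²ρ(∇ρ, ∇ρ) / W) / ρ) / n)² / W`.
For `ρ = 1 + t f + φ(t)` the quantities `|∇ρ|²`, `Δρ` and `∇²ρ(∇ρ, ∇ρ)` are `t²`, `t` and `t³` times
those of `f`, so at each point `H²` is an explicit function of `t`, whose Taylor expansion to second
order is elementary.
-/

section PartialDerivative

variable {m : ℕ} {E : Type} [NormedAddCommGroup E] [NormedSpace ℝ E] {x : En m}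

lemma pd_congr {F G : En m → E} (h : F =ᶠ[nhds x] G) (i : Fin m) : pd i F x = pd i G x := by
  rw [pd, h.fderiv_eq, pd]

lemma pd_const (i : Fin m) (a : E) (x : En m) : pd i (fun _ => a) x = 0 := by
  simp [pd]

lemma pd_add {F G : En m → E} (hF : DifferentiableAt ℝ F x) (hG : DifferentiableAt ℝ G x)
    (i : Fin m) : pd i (fun y => F y + G y) x = pd i F x + pd i G x := by
  simp only [pd, fderiv_fun_add hF hG, add_apply]

lemma pd_smul {u : En m → ℝ} {F : En m → E} (hu : DifferentiableAt ℝ u x)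
    (hF : DifferentiableAt ℝ F x) (i : Fin m) :
    pd i (fun y => u y • F y) x = pd i u x • F x + u x • pd i F x := by
  simp [pd, fderiv_fun_smul hu hF, add_comm]

lemma pd_mul {u v : En m → ℝ} (hu : DifferentiableAt ℝ u x) (hv : DifferentiableAt ℝ v x)
    (i : Fin m) : pd i (fun y => u y * v y) x = pd i u x * v x + u x * pd i v x :=
  pd_smul hu hv i

lemma pd_const_mul (i : Fin m) (a : ℝ) (u : En m → ℝ) (x : En m) :
    pd i (fun y => a * u y) x = a * pd i u x :=
  congrArg (fun T : En m → En m →L[ℝ] ℝ => T x (EuclideanSpace.single i 1))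
    (fderiv_const_smul_field (f := u) a)

lemma pd_affine (i : Fin m) (a b c : ℝ) (u : En m → ℝ) (x : En m) :
    pd i (fun y => a + b * u y + c) x = b * pd i u x := by
  rw [← pd_const_mul, pd, fderiv_add_const, fderiv_const_add, pd]

lemma pd_inner {H : Type} [NormedAddCommGroup H] [InnerProductSpace ℝ H] {F G : En m → H}
    (hF : DifferentiableAt ℝ F x) (hG : DifferentiableAt ℝ G x) (i : Fin m) :
    pd i (fun y => ⟪F y, G y⟫) x = ⟪pd i F x, G x⟫ + ⟪F x, pd i G x⟫ := by
  rw [pd, fderiv_inner_apply ℝ hF hG, add_comm, pd, pd]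

lemma pd_sqrt {u : En m → ℝ} (hu : DifferentiableAt ℝ u x) (h0 : u x ≠ 0) (i : Fin m) :
    pd i (fun y => √(u y)) x = pd i u x / (2 * √(u x)) := by
  rw [pd, fderiv_sqrt hu h0, pd]
  simp [div_eq_inv_mul]

lemma differentiableAt_pd {F : En m → E} (hF : ContDiffAt ℝ 2 F x) (i : Fin m) :
    DifferentiableAt ℝ (pd i F) x :=
  ((hF.fderiv_right (m := 1) le_rfl).differentiableAt one_ne_zero).clm_apply
    (differentiableAt_const _)

lemma pd_comm {F : En m → E} (hF : ContDiffAt ℝ 2 F x) (i j : Fin m) :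
    pd i (pd j F) x = pd j (pd i F) x := by
  have hd : DifferentiableAt ℝ (fderiv ℝ F) x :=
    (hF.fderiv_right (m := 1) le_rfl).differentiableAt one_ne_zero
  have pd_pd_eq (i j : Fin m) : pd i (pd j F) x =
      fderiv ℝ (fderiv ℝ F) x (EuclideanSpace.single i 1) (EuclideanSpace.single j 1) := by
    change fderiv ℝ (fun y => fderiv ℝ F y (EuclideanSpace.single j 1)) x _ = _
    rw [fderiv_clm_apply hd (differentiableAt_const _)]
    simp
  rw [pd_pd_eq, pd_pd_eq]
  exact hF.isSymmSndFDerivAt (by simp) _ _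

lemma pd_pd_smul {u : En m → ℝ} {F : En m → E} (hu : ContDiffAt ℝ 2 u x)
    (hF : ContDiffAt ℝ 2 F x) (i j : Fin m) :
    pd i (pd j fun y => u y • F y) x =
      pd i (pd j u) x • F x + pd j u x • pd i F x + pd i u x • pd j F x +
        u x • pd i (pd j F) x := by
  have hu1 := hu.differentiableAt two_ne_zero
  have hF1 := hF.differentiableAt two_ne_zero
  have pd_near : (pd j fun y => u y • F y) =ᶠ[nhds x]
      fun y => pd j u y • F y + u y • pd j F y := by
    filter_upwards [hu.eventually (by simp), hF.eventually (by simp)] with y huy hFy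
    exact pd_smul (huy.differentiableAt two_ne_zero) (hFy.differentiableAt two_ne_zero) j
  have huj := differentiableAt_pd hu j
  have hFj := differentiableAt_pd hF j
  rw [pd_congr pd_near, pd_add (huj.fun_smul hF1) (hu1.fun_smul hFj), pd_smul huj hF1,
    pd_smul hu1 hFj]
  abel

end PartialDerivative

section MatrixCalculus

variable {m : ℕ} {ι : Type*} {G : En m → Matrix ι ι ℝ} {x : En m}

/-- The entrywise partial derivative of a matrix-valued function. -/
def pdMatrix (i : Fin m) (G : En m → Matrix ι ι ℝ) (x : En m) : Matrix ι ι ℝ :=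
  Matrix.of fun a b => pd i (fun y => G y a b) x

variable [Fintype ι]

lemma pdMatrix_mul {F : En m → Matrix ι ι ℝ} (hF : ∀ a b, DifferentiableAt ℝ (fun y => F y a b) x)
    (hG : ∀ a b, DifferentiableAt ℝ (fun y => G y a b) x) (i : Fin m) :
    pdMatrix i (fun y => F y * G y) x = pdMatrix i F x * G x + F x * pdMatrix i G x := by
  ext a b
  simp only [pdMatrix, Matrix.mul_apply, Matrix.of_apply, Matrix.add_apply]
  rw [pd, fderiv_fun_sum fun c _ => (hF a c).fun_mul (hG c b), sum_apply, ← Finset.sum_add_distrib]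
  exact Finset.sum_congr rfl fun c _ => pd_mul (hF a c) (hG c b) i

variable [DecidableEq ι]

lemma hasFDerivAt_matrix_det {𝕜 E : Type*} [NontriviallyNormedField 𝕜] [NormedAddCommGroup E]
    [NormedSpace 𝕜 E] {G : E → Matrix ι ι 𝕜} {x : E} {G' : ι → ι → E →L[𝕜] 𝕜}
    (hG : ∀ a b, HasFDerivAt (fun y => G y a b) (G' a b) x) :
    HasFDerivAt (fun y => (G y).det) (∑ a, ∑ b, (G x).adjugate b a • G' a b) x := by
  let det : ContinuousMultilinearMap 𝕜 (fun _ : ι => ι → 𝕜) 𝕜 :=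
    ⟨Matrix.detRowAlternating.toMultilinearMap,
      Continuous.matrix_det (A := fun M : ι → ι → 𝕜 => Matrix.of M) continuous_id⟩
  have hrow (a : ι) : HasFDerivAt (fun y => G y a) (ContinuousLinearMap.pi (G' a)) x :=
    hasFDerivAt_pi.2 (hG a)
  refine (HasFDerivAt.multilinear_comp det hrow).congr_fderiv ?_
  ext v
  simp only [sum_apply]
  refine Finset.sum_congr rfl fun a _ => ?_
  change ((G x).updateRow a fun b => G' a b v).det = _
  rw [← Matrix.cramer_transpose_apply, Matrix.cramer_eq_adjugate_mulVec,
    ← Matrix.adjugate_transpose]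
  rfl

lemma differentiableAt_matrix_det {𝕜 E : Type*} [NontriviallyNormedField 𝕜]
    [NormedAddCommGroup E] [NormedSpace 𝕜 E] {G : E → Matrix ι ι 𝕜} {x : E}
    (hG : ∀ a b, DifferentiableAt 𝕜 (fun y => G y a b) x) :
    DifferentiableAt 𝕜 (fun y => (G y).det) x :=
  (hasFDerivAt_matrix_det fun a b => (hG a b).hasFDerivAt).differentiableAt

lemma pd_matrix_det (hG : ∀ a b, DifferentiableAt ℝ (fun y => G y a b) x) (i : Fin m) :
    pd i (fun y => (G y).det) x = ((G x).adjugate * pdMatrix i G x).trace := by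
  rw [pd, (hasFDerivAt_matrix_det fun a b => (hG a b).hasFDerivAt).fderiv, Matrix.trace_mul_comm]
  simp [Matrix.trace, Matrix.mul_apply, pdMatrix, pd, mul_comm]

lemma differentiableAt_matrix_inv_apply {𝕜 E : Type*} [NontriviallyNormedField 𝕜]
    [NormedAddCommGroup E] [NormedSpace 𝕜 E] {G : E → Matrix ι ι 𝕜} {x : E}
    (hG : ∀ a b, DifferentiableAt 𝕜 (fun y => G y a b) x) (hdet : (G x).det ≠ 0) (a b : ι) :
    DifferentiableAt 𝕜 (fun y => (G y)⁻¹ a b) x := by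
  simp only [Matrix.inv_def, Matrix.smul_apply, Ring.inverse_eq_inv', smul_eq_mul,
    Matrix.adjugate_apply]
  refine ((differentiableAt_matrix_det hG).inv hdet).mul (differentiableAt_matrix_det fun c d => ?_)
  by_cases hc : c = b
  · simp [hc]
  · simpa [Matrix.updateRow_ne hc] using hG c d

lemma pdMatrix_inv (hG : ∀ a b, DifferentiableAt ℝ (fun y => G y a b) x) (hdet : (G x).det ≠ 0)
    (i : Fin m) : pdMatrix i (fun y => (G y)⁻¹) x = -((G x)⁻¹ * pdMatrix i G x * (G x)⁻¹) := by
  have hmul_inv : ∀ᶠ y in nhds x, G y * (G y)⁻¹ = 1 := by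
    filter_upwards [(differentiableAt_matrix_det hG).continuousAt.eventually_ne hdet] with y hy
    exact Matrix.mul_nonsing_inv _ hy.isUnit
  have pd_mul_inv : pdMatrix i (fun y => G y * (G y)⁻¹) x = 0 := by
    ext a b
    exact (pd_congr (hmul_inv.mono fun y hy => congrFun₂ hy a b) i).trans (pd_const i _ x)
  rw [pdMatrix_mul hG (differentiableAt_matrix_inv_apply hG hdet)] at pd_mul_inv
  rw [mul_assoc, eq_neg_of_add_eq_zero_left pd_mul_inv, mul_neg, neg_neg,
    Matrix.nonsing_inv_mul_cancel_left _ _ hdet.isUnit]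

end MatrixCalculus

section LaplaceBeltrami

variable {n : ℕ} {Φ : En n → En (n + 1)} {x : En n}

lemma gmet_isSymm (Φ : En n → En (n + 1)) (x : En n) : (gmet Φ x).IsSymm :=
  Matrix.IsSymm.ext fun i j => real_inner_comm (pd i Φ x) (pd j Φ x)

lemma differentiableAt_gmet_apply (hΦ : ContDiffAt ℝ 2 Φ x) (i j : Fin n) :
    DifferentiableAt ℝ (fun y => gmet Φ y i j) x :=
  (differentiableAt_pd hΦ i).inner ℝ (differentiableAt_pd hΦ j)

lemma pd_gmet_apply (hΦ : ContDiffAt ℝ 2 Φ x) (l i j : Fin n) :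
    pd l (fun y => gmet Φ y i j) x =
      ⟪pd l (pd i Φ) x, pd j Φ x⟫ + ⟪pd i Φ x, pd l (pd j Φ) x⟫ :=
  pd_inner (differentiableAt_pd hΦ i) (differentiableAt_pd hΦ j) l

/-- The matrix of the Levi-Civita connection in the direction `∂_i`, with entries
`(k, j) ↦ Γ^k_{ij}`. -/
def connectionMatrix (Φ : En n → En (n + 1)) (i : Fin n) (x : En n) : Matrix (Fin n) (Fin n) ℝ :=
  Matrix.of fun k j => christoffel Φ k i j x

lemma christoffel_eq_inner (hΦ : ContDiffAt ℝ 2 Φ x) (k i j : Fin n) :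
    christoffel Φ k i j x = ∑ l, (gmet Φ x)⁻¹ k l * ⟪pd l Φ x, pd i (pd j Φ) x⟫ := by
  rw [christoffel, Finset.mul_sum]
  refine Finset.sum_congr rfl fun l _ => ?_
  rw [pd_gmet_apply hΦ, pd_gmet_apply hΦ, pd_gmet_apply hΦ, pd_comm hΦ l i, pd_comm hΦ l j,
    pd_comm hΦ j i, real_inner_comm (pd j Φ x), real_inner_comm (pd i Φ x)]
  ring

lemma christoffel_comm (hΦ : ContDiffAt ℝ 2 Φ x) (k i j : Fin n) :
    christoffel Φ k i j x = christoffel Φ k j i x := by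
  simp only [christoffel_eq_inner hΦ, pd_comm hΦ i j]

lemma gmet_mul_connectionMatrix (hΦ : ContDiffAt ℝ 2 Φ x) (hg : (gmet Φ x).det ≠ 0) (i : Fin n) :
    gmet Φ x * connectionMatrix Φ i x = Matrix.of fun l j => ⟪pd l Φ x, pd i (pd j Φ) x⟫ := by
  have : connectionMatrix Φ i x =
      (gmet Φ x)⁻¹ * Matrix.of fun l j => ⟪pd l Φ x, pd i (pd j Φ) x⟫ := by
    ext k j
    exact christoffel_eq_inner hΦ k i j
  rw [this, Matrix.mul_nonsing_inv_cancel_left _ _ hg.isUnit]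

lemma pdMatrix_gmet (hΦ : ContDiffAt ℝ 2 Φ x) (hg : (gmet Φ x).det ≠ 0) (i : Fin n) :
    pdMatrix i (gmet Φ) x =
      gmet Φ x * connectionMatrix Φ i x + (gmet Φ x * connectionMatrix Φ i x).transpose := by
  rw [gmet_mul_connectionMatrix hΦ hg]
  ext a b
  simp [pdMatrix, pd_gmet_apply hΦ, real_inner_comm, add_comm]

lemma pdMatrix_gmet_inv (hΦ : ContDiffAt ℝ 2 Φ x) (hg : (gmet Φ x).det ≠ 0) (i : Fin n) :
    pdMatrix i (fun y => (gmet Φ y)⁻¹) x =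
      -(connectionMatrix Φ i x * (gmet Φ x)⁻¹ +
        (gmet Φ x)⁻¹ * (connectionMatrix Φ i x).transpose) := by
  rw [pdMatrix_inv (differentiableAt_gmet_apply hΦ) hg, pdMatrix_gmet hΦ hg,
    Matrix.transpose_mul, gmet_isSymm, mul_add, add_mul,
    Matrix.nonsing_inv_mul_cancel_left _ _ hg.isUnit, ← mul_assoc,
    Matrix.mul_nonsing_inv_cancel_right _ _ hg.isUnit]

lemma differentiableAt_vElem (hΦ : ContDiffAt ℝ 2 Φ x) (hg : (gmet Φ x).det ≠ 0) :
    DifferentiableAt ℝ (vElem Φ) x :=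
  (differentiableAt_matrix_det (differentiableAt_gmet_apply hΦ)).sqrt hg

lemma pd_vElem (hΦ : ContDiffAt ℝ 2 Φ x) (hg : (gmet Φ x).PosDef) (i : Fin n) :
    pd i (vElem Φ) x = vElem Φ x * (connectionMatrix Φ i x).trace := by
  have hdet := hg.det_pos
  have pd_det : pd i (fun y => (gmet Φ y).det) x =
      2 * (gmet Φ x).det * (connectionMatrix Φ i x).trace := by
    have hadj : (gmet Φ x).adjugate = (gmet Φ x).det • (gmet Φ x)⁻¹ := by
      rw [Matrix.inv_def, Ring.inverse_eq_inv', smul_inv_smul₀ hdet.ne']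
    rw [pd_matrix_det (differentiableAt_gmet_apply hΦ), pdMatrix_gmet hΦ hdet.ne', hadj,
      Matrix.smul_mul, Matrix.trace_smul, mul_add, Matrix.trace_add, Matrix.transpose_mul,
      gmet_isSymm, Matrix.trace_mul_comm _ (_ * gmet Φ x),
      Matrix.nonsing_inv_mul_cancel_left _ _ hdet.ne'.isUnit,
      Matrix.mul_nonsing_inv_cancel_right _ _ hdet.ne'.isUnit, Matrix.trace_transpose, smul_eq_mul]
    ring
  have hsqrt : √(gmet Φ x).det ≠ 0 := (sqrt_pos.2 hdet).ne'
  unfold vElem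
  rw [pd_sqrt (differentiableAt_matrix_det (differentiableAt_gmet_apply hΦ)) hdet.ne', pd_det,
    div_eq_iff (mul_ne_zero two_ne_zero hsqrt)]
  linear_combination (-2 * (connectionMatrix Φ i x).trace) * sq_sqrt hdet.le

lemma sum_connectionMatrix_mul (hΦ : ContDiffAt ℝ 2 Φ x) (A : Matrix (Fin n) (Fin n) ℝ)
    (j : Fin n) : ∑ i, (connectionMatrix Φ i x * A) i j =
      ∑ i, (connectionMatrix Φ i x).trace * A i j := by
  simp only [Matrix.mul_apply, Matrix.trace, Matrix.diag_apply, Finset.sum_mul]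
  rw [Finset.sum_comm]
  simp only [connectionMatrix, Matrix.of_apply, christoffel_comm hΦ]

lemma lapl_eq_sum_hess {u : En n → ℝ} (hΦ : ContDiffAt ℝ 2 Φ x) (hg : (gmet Φ x).PosDef)
    (hu : ContDiffAt ℝ 2 u x) : lapl Φ u x = ∑ i, ∑ j, (gmet Φ x)⁻¹ i j * hess Φ u x i j := by
  have hdet := hg.det_pos.ne'
  have hv : vElem Φ x ≠ 0 := (sqrt_pos.2 hg.det_pos).ne'
  have pd_flux (i j : Fin n) : pd i (fun y => vElem Φ y * (gmet Φ y)⁻¹ i j * pd j u y) x =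
      vElem Φ x * ((connectionMatrix Φ i x).trace * (gmet Φ x)⁻¹ i j * pd j u x
        - (connectionMatrix Φ i x * (gmet Φ x)⁻¹) i j * pd j u x
        + ((gmet Φ x)⁻¹ i j * pd i (pd j u) x
          - ((gmet Φ x)⁻¹ * (connectionMatrix Φ i x).transpose) i j * pd j u x)) := by
    have hinv := differentiableAt_matrix_inv_apply (differentiableAt_gmet_apply hΦ) hdet i j
    have pd_inv := congrFun₂ (pdMatrix_gmet_inv hΦ hdet i) i j
    simp only [pdMatrix, Matrix.of_apply, Matrix.neg_apply, Matrix.add_apply] at pd_inv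
    rw [pd_mul ((differentiableAt_vElem hΦ hdet).fun_mul hinv) (differentiableAt_pd hu j),
      pd_mul (differentiableAt_vElem hΦ hdet) hinv, pd_vElem hΦ hg, pd_inv]
    ring
  have hcancel : ∑ i, ∑ j, (connectionMatrix Φ i x).trace * (gmet Φ x)⁻¹ i j * pd j u x =
      ∑ i, ∑ j, (connectionMatrix Φ i x * (gmet Φ x)⁻¹) i j * pd j u x := by
    rw [Finset.sum_comm, Finset.sum_comm (f := fun i j => (_ * _ : Matrix _ _ ℝ) i j * _)]
    simp only [← Finset.sum_mul, sum_connectionMatrix_mul hΦ]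
  simp only [lapl, pd_flux, ← Finset.mul_sum]
  rw [inv_mul_cancel_left₀ hv]
  simp only [Finset.sum_add_distrib, Finset.sum_sub_distrib, hcancel, sub_self, zero_add, hess,
    mul_sub]
  congr 1
  refine Finset.sum_congr rfl fun i _ => ?_
  simp only [Matrix.mul_apply, Matrix.transpose_apply, connectionMatrix, Matrix.of_apply,
    Finset.sum_mul, Finset.mul_sum]
  rw [Finset.sum_comm]
  simp only [mul_assoc]

end LaplaceBeltrami

section LinearAlgebra

variable {ι : Type*} [Fintype ι]

/-- Sherman–Morrison formula. -/
lemma matrix_inv_add_vecMulVec [DecidableEq ι] {K : Type*} [Field K] {A : Matrix ι ι K}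
    (hA : IsUnit A.det) {u w : ι → K} (hw : 1 + w ⬝ᵥ A⁻¹.mulVec u ≠ 0) :
    (A + Matrix.vecMulVec u w)⁻¹ = A⁻¹ -
      (1 + w ⬝ᵥ A⁻¹.mulVec u)⁻¹ • Matrix.vecMulVec (A⁻¹.mulVec u) (Matrix.vecMul w A⁻¹) := by
  refine Matrix.inv_eq_right_inv ?_
  rw [add_mul, mul_sub, mul_sub, Matrix.mul_nonsing_inv _ hA, Matrix.mul_smul, Matrix.mul_smul,
    Matrix.mul_vecMulVec, Matrix.mulVec_mulVec, Matrix.mul_nonsing_inv _ hA, Matrix.one_mulVec,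
    Matrix.vecMulVec_mul_vecMulVec, Matrix.vecMulVec_mul, Matrix.vecMulVec_smul]
  have hcoef := inv_mul_cancel₀ hw
  linear_combination (norm := module) -hcoef • Matrix.vecMulVec u (Matrix.vecMul w A⁻¹)

lemma exists_smul_eq_of_orthogonal {E : Type*} [NormedAddCommGroup E] [InnerProductSpace ℝ E]
    [FiniteDimensional ℝ E] {e : ι → E} (he : LinearIndependent ℝ e)
    (hdim : Module.finrank ℝ E = Fintype.card ι + 1) {v w : E} (hv0 : v ≠ 0)
    (hv : ∀ i, ⟪v, e i⟫ = 0) (hw : ∀ i, ⟪w, e i⟫ = 0) : ∃ c : ℝ, c • v = w := by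
  set K := Submodule.span ℝ (range e)
  have mem_compl {z : E} (hz : ∀ i, ⟪z, e i⟫ = 0) : z ∈ Kᗮ := by
    have : Submodule.span ℝ {z} ⟂ K :=
      Submodule.isOrtho_span.2 (by rintro _ rfl _ ⟨i, rfl⟩; exact hz i)
    exact this (Submodule.mem_span_singleton_self z)
  have hline : Module.finrank ℝ Kᗮ = 1 := by
    have := K.finrank_add_finrank_orthogonal
    rw [finrank_span_eq_card he] at this
    omega
  obtain ⟨c, hc⟩ := (finrank_eq_one_iff_of_nonzero' (⟨v, mem_compl hv⟩ : Kᗮ)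
    (by simpa using hv0)).1 hline ⟨w, mem_compl hw⟩
  exact ⟨c, congrArg Subtype.val hc⟩

end LinearAlgebra

section Gradient

variable {n : ℕ} {Φ : En n → En (n + 1)} {u : En n → ℝ} {x : En n}

/-- The contravariant components `u^i = Σ_j g^{ij} ∂_j u` of the gradient of `u`. -/
def gradCoord (Φ : En n → En (n + 1)) (u : En n → ℝ) (x : En n) : Fin n → ℝ :=
  (gmet Φ x)⁻¹.mulVec (pd · u x)

/-- The Hessian of `u` evaluated twice on its gradient, `Σ_{ij} (∇²u)_{ij} u^i u^j`. -/
def hessGrad (Φ : En n → En (n + 1)) (u : En n → ℝ) (x : En n) : ℝ :=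
  gradCoord Φ u x ⬝ᵥ (Matrix.of (hess Φ u x)).mulVec (gradCoord Φ u x)

lemma gmet_inv_isSymm (Φ : En n → En (n + 1)) (x : En n) : (gmet Φ x)⁻¹.IsSymm := by
  rw [Matrix.IsSymm, Matrix.transpose_nonsing_inv, gmet_isSymm]

lemma gradSq_eq_dotProduct (Φ : En n → En (n + 1)) (u : En n → ℝ) (x : En n) :
    gradSq Φ u x = (pd · u x) ⬝ᵥ gradCoord Φ u x := by
  simp only [gradSq, gradCoord, dotProduct, Matrix.mulVec, Finset.mul_sum]
  exact Finset.sum_congr rfl fun i _ => Finset.sum_congr rfl fun j _ => by ring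

lemma gradV_eq_sum_gradCoord (Φ : En n → En (n + 1)) (u : En n → ℝ) (x : En n) :
    gradV Φ u x = ∑ j, gradCoord Φ u x j • pd j Φ x := by
  simp only [gradV, gradCoord, Matrix.mulVec, dotProduct, Finset.sum_smul]
  rw [Finset.sum_comm]
  simp only [(gmet_inv_isSymm Φ x).apply]

lemma inner_gradV_pd (hg : (gmet Φ x).det ≠ 0) (u : En n → ℝ) (i : Fin n) :
    ⟪gradV Φ u x, pd i Φ x⟫ = pd i u x := by
  have hgrad : (gmet Φ x).mulVec (gradCoord Φ u x) i = pd i u x := by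
    rw [gradCoord, Matrix.mulVec_mulVec, Matrix.mul_nonsing_inv _ hg.isUnit, Matrix.one_mulVec]
  rw [← hgrad, gradV_eq_sum_gradCoord, sum_inner]
  simp only [real_inner_smul_left, Matrix.mulVec, dotProduct, gmet, Matrix.of_apply, mul_comm]
  simp only [real_inner_comm (pd i Φ x)]

lemma inner_gradV_self (hg : (gmet Φ x).det ≠ 0) (u : En n → ℝ) :
    ⟪gradV Φ u x, gradV Φ u x⟫ = gradSq Φ u x := by
  nth_rw 2 [gradV_eq_sum_gradCoord]
  simp only [inner_sum, real_inner_smul_right, inner_gradV_pd hg, gradSq_eq_dotProduct, dotProduct,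
    mul_comm]

lemma gradSq_nonneg (hg : (gmet Φ x).det ≠ 0) (u : En n → ℝ) : 0 ≤ gradSq Φ u x :=
  inner_gradV_self hg u ▸ real_inner_self_nonneg

lemma hess_eq_sub_inner (hΦ : ContDiffAt ℝ 2 Φ x) (u : En n → ℝ) (i j : Fin n) :
    hess Φ u x i j = pd i (pd j u) x - ⟪gradV Φ u x, pd i (pd j Φ) x⟫ := by
  rw [hess, gradV, sum_inner]
  simp only [christoffel_eq_inner hΦ, sum_inner, real_inner_smul_left, Finset.sum_mul]
  congr 1
  exact Finset.sum_congr rfl fun k _ => Finset.sum_congr rfl fun l _ => by ring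

lemma hess_comm (hΦ : ContDiffAt ℝ 2 Φ x) (hu : ContDiffAt ℝ 2 u x) (i j : Fin n) :
    hess Φ u x i j = hess Φ u x j i := by
  rw [hess_eq_sub_inner hΦ, hess_eq_sub_inner hΦ, pd_comm hu, pd_comm hΦ]

lemma lapl_eq_trace (hΦ : ContDiffAt ℝ 2 Φ x) (hg : (gmet Φ x).PosDef) (hu : ContDiffAt ℝ 2 u x) :
    lapl Φ u x = ((gmet Φ x)⁻¹ * Matrix.of (hess Φ u x)).trace := by
  rw [lapl_eq_sum_hess hΦ hg hu]
  simp only [Matrix.trace, Matrix.diag_apply, Matrix.mul_apply, Matrix.of_apply, hess_comm hΦ hu]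

end Gradient

section SphericalMap

section InnerProductSpace

variable {m : ℕ} {H : Type} [NormedAddCommGroup H] [InnerProductSpace ℝ H] {x : En m}

lemma inner_pd_pd_of_orthogonal {N Y : En m → H} {j : Fin m} (hN : DifferentiableAt ℝ N x)
    (hY : ContDiffAt ℝ 2 Y x) (horth : ∀ᶠ y in nhds x, ⟪N y, pd j Y y⟫ = 0) (i : Fin m) :
    ⟪N x, pd i (pd j Y) x⟫ = -⟪pd i N x, pd j Y x⟫ := by
  have := (pd_congr horth i).trans (pd_const i 0 x)
  rw [pd_inner hN (differentiableAt_pd hY j)] at this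
  linear_combination this

lemma inner_pd_eq_zero_of_norm_eq_one {Φ : En m → H} (hΦ : DifferentiableAt ℝ Φ x)
    (hsph : ∀ᶠ y in nhds x, ‖Φ y‖ = 1) (i : Fin m) : ⟪Φ x, pd i Φ x⟫ = 0 := by
  have hinner : (fun y => ⟪Φ y, Φ y⟫) =ᶠ[nhds x] fun _ => 1 :=
    hsph.mono fun y hy => by simp only [real_inner_self_eq_norm_sq, hy, one_pow]
  have := (pd_congr hinner i).trans (pd_const i 1 x)
  rw [pd_inner hΦ hΦ, real_inner_comm] at this
  linarith

end InnerProductSpace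

variable {n : ℕ} {Φ : En n → En (n + 1)} {x : En n}

lemma inner_pd_pd_of_norm_eq_one (hΦ : ContDiffAt ℝ 2 Φ x)
    (hsph : ∀ᶠ y in nhds x, ‖Φ y‖ = 1) (i j : Fin n) :
    ⟪Φ x, pd i (pd j Φ) x⟫ = -gmet Φ x i j := by
  refine inner_pd_pd_of_orthogonal (hΦ.differentiableAt two_ne_zero) hΦ ?_ i
  filter_upwards [hΦ.eventually (by simp), hsph.eventually_nhds] with y hy hsphy
  exact inner_pd_eq_zero_of_norm_eq_one (hy.differentiableAt two_ne_zero) hsphy j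

lemma inner_gradV_of_norm_eq_one (hΦ : DifferentiableAt ℝ Φ x)
    (hsph : ∀ᶠ y in nhds x, ‖Φ y‖ = 1) (u : En n → ℝ) : ⟪Φ x, gradV Φ u x⟫ = 0 := by
  rw [gradV_eq_sum_gradCoord, inner_sum]
  simp only [real_inner_smul_right, inner_pd_eq_zero_of_norm_eq_one hΦ hsph, mul_zero,
    Finset.sum_const_zero]

end SphericalMap

section RadialGraph

variable {n : ℕ} {Φ : En n → En (n + 1)} {ρ : En n → ℝ} {x : En n}

/-- The outward normal `ρ Φ - ∇ρ` of the radial graph `ρ Φ` over the sphere, not normalized. -/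
def graphNormal (Φ : En n → En (n + 1)) (ρ : En n → ℝ) (x : En n) : En (n + 1) :=
  ρ x • Φ x - gradV Φ ρ x

lemma gmet_smul (hΦ : DifferentiableAt ℝ Φ x) (hsph : ∀ᶠ y in nhds x, ‖Φ y‖ = 1)
    (hρ : DifferentiableAt ℝ ρ x) : gmet (fun y => ρ y • Φ y) x =
      ρ x ^ 2 • gmet Φ x + Matrix.vecMulVec (pd · ρ x) (pd · ρ x) := by
  ext i j
  simp only [gmet, Matrix.of_apply, Matrix.add_apply, Matrix.smul_apply, Matrix.vecMulVec_apply,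
    pd_smul hρ hΦ, inner_add_left, inner_add_right, real_inner_smul_left, real_inner_smul_right,
    inner_pd_eq_zero_of_norm_eq_one hΦ hsph, real_inner_comm (Φ x) (pd _ Φ x),
    real_inner_self_eq_norm_sq, hsph.self_of_nhds, smul_eq_mul]
  ring

lemma posDef_gmet_smul (hΦ : DifferentiableAt ℝ Φ x) (hsph : ∀ᶠ y in nhds x, ‖Φ y‖ = 1)
    (hg : (gmet Φ x).PosDef) (hρ : DifferentiableAt ℝ ρ x) (hρ0 : ρ x ≠ 0) :
    (gmet (fun y => ρ y • Φ y) x).PosDef := by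
  rw [gmet_smul hΦ hsph hρ]
  exact (hg.smul (by positivity)).add_posSemidef (Matrix.posSemidef_vecMulVec_self_star _)

lemma inner_graphNormal_pd (hΦ : DifferentiableAt ℝ Φ x) (hsph : ∀ᶠ y in nhds x, ‖Φ y‖ = 1)
    (hg : (gmet Φ x).det ≠ 0) (hρ : DifferentiableAt ℝ ρ x) (i : Fin n) :
    ⟪graphNormal Φ ρ x, pd i (fun y => ρ y • Φ y) x⟫ = 0 := by
  simp only [graphNormal, pd_smul hρ hΦ, inner_sub_left, inner_add_right, real_inner_smul_left,
    real_inner_smul_right, inner_pd_eq_zero_of_norm_eq_one hΦ hsph, real_inner_self_eq_norm_sq,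
    hsph.self_of_nhds, real_inner_comm (Φ x) (gradV Φ ρ x), inner_gradV_of_norm_eq_one hΦ hsph,
    inner_gradV_pd hg]
  ring

lemma inner_graphNormal_self (hΦ : DifferentiableAt ℝ Φ x) (hsph : ∀ᶠ y in nhds x, ‖Φ y‖ = 1)
    (hg : (gmet Φ x).det ≠ 0) (ρ : En n → ℝ) :
    ⟪graphNormal Φ ρ x, graphNormal Φ ρ x⟫ = ρ x ^ 2 + gradSq Φ ρ x := by
  simp only [graphNormal, inner_sub_left, inner_sub_right, real_inner_smul_left,
    real_inner_smul_right, real_inner_self_eq_norm_sq (Φ x), hsph.self_of_nhds,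
    real_inner_comm (Φ x) (gradV Φ ρ x), inner_gradV_of_norm_eq_one hΦ hsph, inner_gradV_self hg]
  ring

lemma inner_graphNormal_pd_pd (hΦ : ContDiffAt ℝ 2 Φ x) (hsph : ∀ᶠ y in nhds x, ‖Φ y‖ = 1)
    (hg : (gmet Φ x).det ≠ 0) (hρ : ContDiffAt ℝ 2 ρ x) (i j : Fin n) :
    ⟪graphNormal Φ ρ x, pd i (pd j fun y => ρ y • Φ y) x⟫ =
      ρ x * hess Φ ρ x i j + ρ x ^ 2 * gmet Φ x i j - 2 * gmet (fun y => ρ y • Φ y) x i j := by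
  have hΦ1 := hΦ.differentiableAt two_ne_zero
  simp only [graphNormal, pd_pd_smul hρ hΦ, inner_sub_left, inner_add_right, real_inner_smul_left,
    real_inner_smul_right, inner_pd_eq_zero_of_norm_eq_one hΦ1 hsph, real_inner_self_eq_norm_sq,
    hsph.self_of_nhds, real_inner_comm (Φ x) (gradV Φ ρ x), inner_gradV_of_norm_eq_one hΦ1 hsph,
    inner_gradV_pd hg, inner_pd_pd_of_norm_eq_one hΦ hsph, hess_eq_sub_inner hΦ,
    gmet_smul hΦ1 hsph (hρ.differentiableAt two_ne_zero), Matrix.add_apply, Matrix.smul_apply,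
    Matrix.vecMulVec_apply, smul_eq_mul]
  ring

lemma exists_unitNormal_eq_smul_graphNormal (hΦ : DifferentiableAt ℝ Φ x)
    (hsph : ∀ᶠ y in nhds x, ‖Φ y‖ = 1) (hg : (gmet Φ x).PosDef) (hρ : DifferentiableAt ℝ ρ x)
    (hρ0 : ρ x ≠ 0) {ν : En (n + 1)} (hν : ‖ν‖ = 1)
    (hort : ∀ i, ⟪ν, pd i (fun y => ρ y • Φ y) x⟫ = 0) :
    ∃ c : ℝ, ν = c • graphNormal Φ ρ x ∧ c ^ 2 * (ρ x ^ 2 + gradSq Φ ρ x) = 1 := by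
  have hdet := hg.det_pos.ne'
  have hnorm := inner_graphNormal_self hΦ hsph hdet ρ
  have hne : graphNormal Φ ρ x ≠ 0 := by
    have := gradSq_nonneg hdet ρ
    rw [← inner_self_ne_zero (𝕜 := ℝ), hnorm]
    positivity
  obtain ⟨c, rfl⟩ := exists_smul_eq_of_orthogonal
    (Matrix.posDef_gram_iff_linearIndependent.1 (posDef_gmet_smul hΦ hsph hg hρ hρ0)) (by simp) hne
    (inner_graphNormal_pd hΦ hsph hdet hρ) hort
  refine ⟨c, rfl, ?_⟩
  have hunit := real_inner_self_eq_norm_sq (c • graphNormal Φ ρ x)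
  rw [hν, real_inner_smul_left, real_inner_smul_right, hnorm] at hunit
  linear_combination hunit

lemma sff_transpose_eq {N : En n → En (n + 1)} {c : ℝ} (hΦ : ContDiffAt ℝ 2 Φ x)
    (hsph : ∀ᶠ y in nhds x, ‖Φ y‖ = 1) (hg : (gmet Φ x).det ≠ 0) (hρ : ContDiffAt ℝ 2 ρ x)
    (hN : DifferentiableAt ℝ N x) (hNx : N x = c • graphNormal Φ ρ x)
    (hort : ∀ᶠ y in nhds x, ∀ i, ⟪N y, pd i (fun z => ρ z • Φ z) y⟫ = 0) :
    (sff (fun y => ρ y • Φ y) N x).transpose =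
      -c • (ρ x • Matrix.of (hess Φ ρ x) + ρ x ^ 2 • gmet Φ x
        - (2 : ℝ) • gmet (fun y => ρ y • Φ y) x) := by
  ext i j
  have hX : ContDiffAt ℝ 2 (fun y => ρ y • Φ y) x := hρ.smul hΦ
  have hsff := inner_pd_pd_of_orthogonal hN hX (hort.mono fun y hy => hy j) i
  rw [hNx, real_inner_smul_left, inner_graphNormal_pd_pd hΦ hsph hg hρ] at hsff
  simp only [sff, Matrix.transpose_apply, Matrix.of_apply, Matrix.smul_apply, Matrix.sub_apply,
    Matrix.add_apply, smul_eq_mul]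
  rw [real_inner_comm]
  linear_combination hsff

lemma gmet_smul_inv (hΦ : DifferentiableAt ℝ Φ x) (hsph : ∀ᶠ y in nhds x, ‖Φ y‖ = 1)
    (hg : (gmet Φ x).det ≠ 0) (hρ : DifferentiableAt ℝ ρ x) (hρ0 : ρ x ≠ 0) :
    (gmet (fun y => ρ y • Φ y) x)⁻¹ = (ρ x ^ 2)⁻¹ • ((gmet Φ x)⁻¹ -
      (ρ x ^ 2 + gradSq Φ ρ x)⁻¹ • Matrix.vecMulVec (gradCoord Φ ρ x) (gradCoord Φ ρ x)) := by
  have hr : ρ x ^ 2 ≠ 0 := pow_ne_zero 2 hρ0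
  have hW : ρ x ^ 2 + gradSq Φ ρ x ≠ 0 := by
    have := gradSq_nonneg hg ρ
    positivity
  have hinv : (ρ x ^ 2 • gmet Φ x)⁻¹ = (ρ x ^ 2)⁻¹ • (gmet Φ x)⁻¹ :=
    Matrix.inv_smul' (gmet Φ x) (Units.mk0 _ hr) hg.isUnit
  have hgrad : Matrix.vecMul (pd · ρ x) (gmet Φ x)⁻¹ = gradCoord Φ ρ x := by
    rw [← Matrix.mulVec_transpose, gmet_inv_isSymm, gradCoord]
  have hdenom : 1 + (pd · ρ x) ⬝ᵥ (ρ x ^ 2 • gmet Φ x)⁻¹.mulVec (pd · ρ x) =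
      (ρ x ^ 2 + gradSq Φ ρ x) / ρ x ^ 2 := by
    rw [hinv, Matrix.smul_mulVec, dotProduct_smul, ← gradCoord, ← gradSq_eq_dotProduct, smul_eq_mul]
    field_simp
  rw [gmet_smul hΦ hsph hρ, matrix_inv_add_vecMulVec, hdenom, hinv, Matrix.smul_mulVec,
    ← gradCoord, Matrix.vecMul_smul, hgrad, Matrix.smul_vecMulVec, Matrix.vecMulVec_smul, smul_sub,
    smul_smul, smul_smul, smul_smul]
  · congr 2
    field_simp
  · rw [Matrix.det_smul]
    exact (mul_ne_zero (pow_ne_zero _ hr) hg).isUnit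
  · rw [hdenom]
    exact div_ne_zero hW hr

lemma trace_gmet_smul_inv_mul (hΦ : DifferentiableAt ℝ Φ x) (hsph : ∀ᶠ y in nhds x, ‖Φ y‖ = 1)
    (hg : (gmet Φ x).det ≠ 0) (hρ : DifferentiableAt ℝ ρ x) (hρ0 : ρ x ≠ 0)
    (B : Matrix (Fin n) (Fin n) ℝ) :
    ((gmet (fun y => ρ y • Φ y) x)⁻¹ * B).trace = (ρ x ^ 2)⁻¹ * (((gmet Φ x)⁻¹ * B).trace -
      (ρ x ^ 2 + gradSq Φ ρ x)⁻¹ * (gradCoord Φ ρ x ⬝ᵥ B.mulVec (gradCoord Φ ρ x))) := by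
  rw [gmet_smul_inv hΦ hsph hg hρ hρ0, Matrix.smul_mul, sub_mul, Matrix.smul_mul,
    Matrix.vecMulVec_mul, Matrix.trace_smul, Matrix.trace_sub, Matrix.trace_smul,
    Matrix.trace_vecMulVec, dotProduct_comm, ← Matrix.dotProduct_mulVec, smul_eq_mul, smul_eq_mul]

lemma Hmean_eq_trace (Y N : En n → En (n + 1)) (x : En n) :
    Hmean Y N x = ((gmet Y x)⁻¹ * (sff Y N x).transpose).trace / n := by
  rw [← Matrix.sum_hadamard_eq, div_eq_inv_mul, ← one_div]
  rfl

lemma Hmean_smul {N : En n → En (n + 1)} {c : ℝ} (hΦ : ContDiffAt ℝ 2 Φ x)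
    (hsph : ∀ᶠ y in nhds x, ‖Φ y‖ = 1) (hg : (gmet Φ x).PosDef) (hρ : ContDiffAt ℝ 2 ρ x)
    (hρ0 : ρ x ≠ 0) (hN : DifferentiableAt ℝ N x) (hNx : N x = c • graphNormal Φ ρ x)
    (hort : ∀ᶠ y in nhds x, ∀ i, ⟪N y, pd i (fun z => ρ z • Φ z) y⟫ = 0) :
    Hmean (fun y => ρ y • Φ y) N x = c * (n + gradSq Φ ρ x / (ρ x ^ 2 + gradSq Φ ρ x) -
        (lapl Φ ρ x - hessGrad Φ ρ x / (ρ x ^ 2 + gradSq Φ ρ x)) / ρ x) / n := by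
  have hdet := hg.det_pos.ne'
  have hΦ1 := hΦ.differentiableAt two_ne_zero
  have hρ1 := hρ.differentiableAt two_ne_zero
  have trace_inv_mul := trace_gmet_smul_inv_mul hΦ1 hsph hdet hρ1 hρ0
  have trace_hess := trace_inv_mul (Matrix.of (hess Φ ρ x))
  have trace_gmet := trace_inv_mul (gmet Φ x)
  have trace_self : ((gmet (fun y => ρ y • Φ y) x)⁻¹ * gmet (fun y => ρ y • Φ y) x).trace = n := by
    rw [Matrix.nonsing_inv_mul _ (posDef_gmet_smul hΦ1 hsph hg hρ1 hρ0).det_pos.ne'.isUnit,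
      Matrix.trace_one, Fintype.card_fin]
  have hgrad : gradCoord Φ ρ x ⬝ᵥ (gmet Φ x).mulVec (gradCoord Φ ρ x) = gradSq Φ ρ x := by
    rw [gradSq_eq_dotProduct, gradCoord, Matrix.mulVec_mulVec,
      Matrix.mul_nonsing_inv _ hdet.isUnit, Matrix.one_mulVec, dotProduct_comm]
  rw [← lapl_eq_trace hΦ hg hρ, ← hessGrad] at trace_hess
  rw [hgrad, Matrix.nonsing_inv_mul _ hdet.isUnit, Matrix.trace_one, Fintype.card_fin] at trace_gmet
  rw [Hmean_eq_trace, sff_transpose_eq hΦ hsph hdet hρ hN hNx hort]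
  simp only [Matrix.mul_smul, mul_add, mul_sub, Matrix.trace_smul, Matrix.trace_add,
    Matrix.trace_sub, smul_eq_mul, trace_hess, trace_gmet, trace_self]
  field_simp
  ring

lemma Hmean_sq_smul {N : En n → En (n + 1)} (hΦ : ContDiffAt ℝ 2 Φ x)
    (hsph : ∀ᶠ y in nhds x, ‖Φ y‖ = 1) (hg : (gmet Φ x).PosDef) (hρ : ContDiffAt ℝ 2 ρ x)
    (hρ0 : ρ x ≠ 0) (hN : DifferentiableAt ℝ N x) (hunit : ‖N x‖ = 1)
    (hort : ∀ᶠ y in nhds x, ∀ i, ⟪N y, pd i (fun z => ρ z • Φ z) y⟫ = 0) :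
    Hmean (fun y => ρ y • Φ y) N x ^ 2 = ((n + gradSq Φ ρ x / (ρ x ^ 2 + gradSq Φ ρ x) -
        (lapl Φ ρ x - hessGrad Φ ρ x / (ρ x ^ 2 + gradSq Φ ρ x)) / ρ x) / n) ^ 2 /
      (ρ x ^ 2 + gradSq Φ ρ x) := by
  obtain ⟨c, hNx, hc⟩ := exists_unitNormal_eq_smul_graphNormal (hΦ.differentiableAt two_ne_zero)
    hsph hg (hρ.differentiableAt two_ne_zero) hρ0 hunit hort.self_of_nhds
  rw [Hmean_smul hΦ hsph hg hρ hρ0 hN hNx hort, mul_div_assoc, mul_pow,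
    eq_inv_of_mul_eq_one_left hc, inv_mul_eq_div]

end RadialGraph

section Affine

variable {n : ℕ} (Φ : En n → En (n + 1)) (a b c : ℝ) (u : En n → ℝ) (x : En n)

lemma gradSq_affine : gradSq Φ (fun y => a + b * u y + c) x = b ^ 2 * gradSq Φ u x := by
  simp only [gradSq, pd_affine, Finset.mul_sum]
  exact Finset.sum_congr rfl fun i _ => Finset.sum_congr rfl fun j _ => by ring

lemma lapl_affine : lapl Φ (fun y => a + b * u y + c) x = b * lapl Φ u x := by
  simp only [lapl, pd_affine, mul_left_comm _ b, pd_const_mul, ← Finset.mul_sum]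

lemma hessGrad_affine : hessGrad Φ (fun y => a + b * u y + c) x = b ^ 3 * hessGrad Φ u x := by
  have hgrad : gradCoord Φ (fun y => a + b * u y + c) x = b • gradCoord Φ u x := by
    simp only [gradCoord, pd_affine, ← Matrix.mulVec_smul]
    rfl
  have hhess : Matrix.of (hess Φ (fun y => a + b * u y + c) x) = b • Matrix.of (hess Φ u x) := by
    ext i j
    simp only [hess, pd_affine, pd_const_mul, mul_left_comm _ b, ← Finset.mul_sum,
      Matrix.of_apply, Matrix.smul_apply, smul_eq_mul, mul_sub]
  rw [hessGrad, hgrad, hhess, Matrix.smul_mulVec, Matrix.mulVec_smul, dotProduct_smul,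
    dotProduct_smul, smul_dotProduct, hessGrad]
  simp only [smul_eq_mul]
  ring

end Affine

section TwoJet

variable {𝕜 : Type*} [NontriviallyNormedField 𝕜]

/-- `u` is twice differentiable at `t`, with value `a`, first derivative `b` and second
derivative `c` there. -/
def HasTwoJetAt (u : 𝕜 → 𝕜) (a b c t : 𝕜) : Prop :=
  ∃ u' : 𝕜 → 𝕜, (∀ᶠ s in nhds t, HasDerivAt u (u' s) s) ∧ u t = a ∧ u' t = b ∧ HasDerivAt u' c t

namespace HasTwoJetAt

variable {u v : 𝕜 → 𝕜} {a a' b b' c c' t : 𝕜}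

lemma deriv_deriv_eq (hu : HasTwoJetAt u a b c t) : deriv (deriv u) t = c := by
  obtain ⟨u', hderiv, -, -, hderiv2⟩ := hu
  exact (hderiv2.congr_of_eventuallyEq (hderiv.mono fun s hs => hs.deriv)).deriv

lemma congr (hu : HasTwoJetAt u a b c t) (h : v =ᶠ[nhds t] u) : HasTwoJetAt v a b c t := by
  obtain ⟨u', hderiv, rfl, rfl, hderiv2⟩ := hu
  refine ⟨u', ?_, h.eq_of_nhds, rfl, hderiv2⟩
  filter_upwards [hderiv, h.eventuallyEq_nhds] with s hs hvu using hs.congr_of_eventuallyEq hvu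

lemma continuousAt (hu : HasTwoJetAt u a b c t) : ContinuousAt u t := by
  obtain ⟨u', hderiv, -⟩ := hu
  exact hderiv.self_of_nhds.continuousAt

lemma of_contDiffAt (hu : ContDiffAt 𝕜 2 u t) :
    HasTwoJetAt u (u t) (deriv u t) (deriv (deriv u) t) t := by
  refine ⟨deriv u, ?_, rfl, rfl, DifferentiableAt.hasDerivAt ?_⟩
  · filter_upwards [hu.eventually (by simp)] with s hs
    exact (hs.differentiableAt two_ne_zero).hasDerivAt
  · exact ((hu.fderiv_right (m := 1) one_add_one_eq_two.le).differentiableAt one_ne_zero).clm_apply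
      (differentiableAt_const 1)

protected lemma const (a t : 𝕜) : HasTwoJetAt (fun _ => a) a 0 0 t :=
  ⟨fun _ => 0, .of_forall fun s => hasDerivAt_const s a, rfl, rfl, hasDerivAt_const t 0⟩

protected lemma id (t : 𝕜) : HasTwoJetAt (fun s => s) t 1 0 t :=
  ⟨fun _ => 1, .of_forall hasDerivAt_id, rfl, rfl, hasDerivAt_const t 1⟩

lemma add (hu : HasTwoJetAt u a b c t) (hv : HasTwoJetAt v a' b' c' t) :
    HasTwoJetAt (fun s => u s + v s) (a + a') (b + b') (c + c') t := by
  obtain ⟨u', hu1, rfl, rfl, hu2⟩ := hu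
  obtain ⟨v', hv1, rfl, rfl, hv2⟩ := hv
  exact ⟨fun s => u' s + v' s, hu1.mp (hv1.mono fun s hvs hus => hus.add hvs), rfl, rfl,
    hu2.add hv2⟩

lemma mul (hu : HasTwoJetAt u a b c t) (hv : HasTwoJetAt v a' b' c' t) :
    HasTwoJetAt (fun s => u s * v s) (a * a') (b * a' + a * b')
      (c * a' + 2 * b * b' + a * c') t := by
  obtain ⟨u', hu1, rfl, rfl, hu2⟩ := hu
  obtain ⟨v', hv1, rfl, rfl, hv2⟩ := hv
  refine ⟨fun s => u' s * v s + u s * v' s, hu1.mp (hv1.mono fun s hvs hus => hus.mul hvs), rfl,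
    rfl, ?_⟩
  exact ((hu2.mul hv1.self_of_nhds).add (hu1.self_of_nhds.mul hv2)).congr_deriv (by ring)

lemma inv (hu : HasTwoJetAt u a b c t) (ha : a ≠ 0) :
    HasTwoJetAt (fun s => (u s)⁻¹) a⁻¹ (-b / a ^ 2) (-c / a ^ 2 + 2 * b ^ 2 / a ^ 3) t := by
  obtain ⟨u', hu1, rfl, rfl, hu2⟩ := hu
  have hne : ∀ᶠ s in nhds t, u s ≠ 0 := hu1.self_of_nhds.continuousAt.eventually_ne ha
  refine ⟨fun s => -u' s / u s ^ 2, hu1.mp (hne.mono fun s hs hus => hus.inv hs), rfl, rfl, ?_⟩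
  refine (hu2.neg.div (hu1.self_of_nhds.pow 2) (pow_ne_zero 2 ha)).congr_deriv ?_
  simp only [Pi.pow_apply, Pi.neg_apply]
  field_simp
  push_cast
  ring

end HasTwoJetAt

lemma hasTwoJetAt_curvature_sq {r : ℝ → ℝ} {b p : ℝ} (hr : HasTwoJetAt r 1 b p 0) {n : ℝ}
    (hn : n ≠ 0) (q L B : ℝ) :
    HasTwoJetAt (fun t => ((n + t ^ 2 * q / (r t ^ 2 + t ^ 2 * q) -
        (t * L - t ^ 3 * B / (r t ^ 2 + t ^ 2 * q)) / r t) / n) ^ 2 / (r t ^ 2 + t ^ 2 * q))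
      1 (-2 * (b + L / n))
      (6 * b ^ 2 + 12 / n * b * L + 2 / n ^ 2 * L ^ 2 + (4 - 2 * n) / n * q - 2 * p) 0 := by
  have ht2 := (HasTwoJetAt.id (0 : ℝ)).mul (.id 0)
  have hW := (hr.mul hr).add (ht2.mul (.const q 0))
  have hW_inv := hW.inv (by norm_num)
  have hP := ((HasTwoJetAt.const n 0).add (((ht2.mul (.const q 0)).mul hW_inv).add
    ((((HasTwoJetAt.id (0 : ℝ)).mul (.const (-L) 0)).add
      ((((HasTwoJetAt.id (0 : ℝ)).mul ht2).mul (.const B 0)).mul hW_inv)).mul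
        (hr.inv one_ne_zero)))).mul (.const n⁻¹ 0)
  convert (hP.mul hP).mul hW_inv using 1
  · funext t
    ring
  · field_simp; ring
  · field_simp; ring
  · field_simp; ring

end TwoJet

theorem second_variation_mean_curvature_sq_general {n : ℕ} (hn : 1 ≤ n) {Φ : En n → En (n + 1)}
    {f : En n → ℝ} {φ : ℝ → ℝ} {N : ℝ → En n → En (n + 1)} {x : En n}
    (hΦ : ContDiffAt ℝ 2 Φ x) (hf : ContDiffAt ℝ 2 f x) (hφ : ContDiffAt ℝ 2 φ 0) (hφ0 : φ 0 = 0)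
    (hsph : ∀ᶠ y in nhds x, ‖Φ y‖ = 1) (himm : (gmet Φ x).PosDef)
    (hN : ∀ᶠ t in nhds (0 : ℝ), DifferentiableAt ℝ (N t) x ∧ ‖N t x‖ = 1 ∧
      ∀ᶠ y in nhds x, ∀ i, ⟪N t y, pd i (Xvar f φ Φ t) y⟫ = 0) :
    deriv (deriv (fun t => (Hmean (Xvar f φ Φ t) (N t) x) ^ 2)) 0
      = 6 * (f x + deriv φ 0) ^ 2
        + (12 / (n : ℝ)) * (f x + deriv φ 0) * lapl Φ f x
        + (2 / (n : ℝ) ^ 2) * (lapl Φ f x) ^ 2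
        + ((4 - 2 * (n : ℝ)) / n) * gradSq Φ f x
        - 2 * deriv (deriv φ) 0 := by
  have radius_jet :
      HasTwoJetAt (fun t => 1 + t * f x + φ t) 1 (f x + deriv φ 0) (deriv (deriv φ) 0) 0 := by
    convert ((HasTwoJetAt.const 1 0).add ((HasTwoJetAt.id 0).mul (.const (f x) 0))).add
      (HasTwoJetAt.of_contDiffAt hφ) using 1 <;> simp [hφ0]
  have radius_ne : ∀ᶠ t in nhds (0 : ℝ), 1 + t * f x + φ t ≠ 0 :=
    radius_jet.continuousAt.eventually_ne (by simp [hφ0])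
  have hn0 : (n : ℝ) ≠ 0 := Nat.cast_ne_zero.2 (by lia)
  refine ((hasTwoJetAt_curvature_sq radius_jet hn0 (gradSq Φ f x) (lapl Φ f x)
    (hessGrad Φ f x)).congr ?_).deriv_deriv_eq
  filter_upwards [radius_ne, hN] with t hr ⟨hdiff, hunit, hort⟩
  have hρ : ContDiffAt ℝ 2 (fun y => 1 + t * f y + φ t) x :=
    (contDiffAt_const.add (contDiffAt_const.mul hf)).add contDiffAt_const
  have curvature_sq := Hmean_sq_smul hΦ hsph himm hρ hr hdiff hunit hort
  rwa [gradSq_affine, lapl_affine, hessGrad_affine] at curvature_sq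

/-- `∂²(H²)/∂t² |_(t=0)
= 6 (f + φ'(0))² + (12/n)(f + φ'(0)) Δf + (2/n²)(Δf)² + ((4−2n)/n) |∇f|² − 2 φ''(0)`. -/
theorem second_variation_mean_curvature_sq {n : ℕ} (hn : 1 ≤ n) (U : Set (En n)) (hU : IsOpen U)
    (Φ : En n → En (n + 1)) (f : En n → ℝ) (φ : ℝ → ℝ) (ε : ℝ) (hε : 0 < ε)
    (hΦ : ContDiffOn ℝ (⊤ : ℕ∞) Φ U) (hf : ContDiffOn ℝ (⊤ : ℕ∞) f U)
    (hφ : ContDiffOn ℝ (⊤ : ℕ∞) φ (Ioo (-ε) ε)) (hφ0 : φ 0 = 0)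
    (hsph : ∀ x ∈ U, ‖Φ x‖ = 1)
    (himm : ∀ x ∈ U, (gmet Φ x).PosDef)
    (N : ℝ → En n → En (n + 1))
    (hNsm : ContDiffOn ℝ (⊤ : ℕ∞) (fun p : ℝ × En n => N p.1 p.2) (Ioo (-ε) ε ×ˢ U))
    (hNunit : ∀ t ∈ Ioo (-ε) ε, ∀ x ∈ U, ‖N t x‖ = 1)
    (hNorth : ∀ t ∈ Ioo (-ε) ε, ∀ x ∈ U, ∀ i : Fin n, ⟪N t x, pd i (Xvar f φ Φ t) x⟫ = 0)
    (hN0 : ∀ x ∈ U, N 0 x = Φ x) :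
    ∀ x ∈ U,
      deriv (deriv (fun t => (Hmean (Xvar f φ Φ t) (N t) x) ^ 2)) 0
        = 6 * (f x + deriv φ 0) ^ 2
          + (12 / (n : ℝ)) * (f x + deriv φ 0) * lapl Φ f x
          + (2 / (n : ℝ) ^ 2) * (lapl Φ f x) ^ 2
          + ((4 - 2 * (n : ℝ)) / n) * gradSq Φ f x
          - 2 * deriv (deriv φ) 0 := by
  intro x hx
  have hUx : U ∈ nhds x := hU.mem_nhds hx
  have hI : Ioo (-ε) ε ∈ nhds (0 : ℝ) := Ioo_mem_nhds (neg_lt_zero.2 hε) hε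
  refine second_variation_mean_curvature_sq_general hn ((hΦ.contDiffAt hUx).of_le ?_)
    ((hf.contDiffAt hUx).of_le ?_) ((hφ.contDiffAt hI).of_le ?_) hφ0
    (Filter.eventually_of_mem hUx hsph) (himm x hx) ?_
  any_goals exact WithTop.coe_le_coe.2 le_top
  filter_upwards [hI] with t ht
  have hN : DifferentiableAt ℝ (fun p : ℝ × En n => N p.1 p.2) (t, x) :=
    (hNsm.contDiffAt ((isOpen_Ioo.prod hU).mem_nhds ⟨ht, hx⟩)).differentiableAt (by simp)
  exact ⟨hN.comp x ((differentiableAt_const t).prodMk differentiableAt_id), hNunit t ht x hx,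
    Filter.eventually_of_mem hUx (hNorth t ht)⟩
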